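/- (Converse part of Theorem 3, download cost.) In the MM-SPIR model (with all constraints), suppose in addition that for each n ∈ {1,…,N} the answer A_n^{[𝒫]} takes values in F_q^{d_n} for some natural number d_n (a string of d_n symbols from the field with q elements), and let D = d_1 + ⋯ + d_N be the total download cost. Then D ≥ ⌈N·P·L / (N−1)⌉. -/

import Mathlib

open Finset

namespace MMSPIR

variable {Ω : Type} [Fintype Ω]

/-- Probability that the random variable `X` takes the value `v`,
under the weight function `p` on the finite sample space `Ω`. -/
noncomputable def prob (p : Ω → ℝ) {V : Type} [DecidableEq V] (X : Ω → V) (v : V) : ℝ :=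
  ∑ ω ∈ Finset.univ.filter (fun ω => X ω = v), p ω

/-- Shannon entropy of `X`, with logarithm taken to base `q`. -/
noncomputable def ent (q : ℕ) (p : Ω → ℝ) {V : Type} [Fintype V] [DecidableEq V]
    (X : Ω → V) : ℝ :=
  -∑ v : V, prob p X v * Real.logb q (prob p X v)

/-- Conditional entropy `H(X | Y)`, base `q`. -/
noncomputable def cent (q : ℕ) (p : Ω → ℝ) {V W : Type} [Fintype V] [DecidableEq V]
    [Fintype W] [DecidableEq W] (X : Ω → V) (Y : Ω → W) : ℝ :=
  ent q p (fun ω => (X ω, Y ω)) - ent q p Y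

/-- Mutual information `I(X ; Y)`, base `q`. -/
noncomputable def mi (q : ℕ) (p : Ω → ℝ) {V W : Type} [Fintype V] [DecidableEq V]
    [Fintype W] [DecidableEq W] (X : Ω → V) (Y : Ω → W) : ℝ :=
  ent q p X + ent q p Y - ent q p (fun ω => (X ω, Y ω))

/-- Conditional mutual information `I(X ; Y | Z)`, base `q`. -/
noncomputable def cmi (q : ℕ) (p : Ω → ℝ) {U V W : Type} [Fintype U] [DecidableEq U]
    [Fintype V] [DecidableEq V] [Fintype W] [DecidableEq W]
    (X : Ω → U) (Y : Ω → V) (Z : Ω → W) : ℝ :=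
  cent q p X Z + cent q p Y Z - cent q p (fun ω => (X ω, Y ω)) Z

/-- `X` and `Y` have the same distribution. -/
def IdentDist (p : Ω → ℝ) {V : Type} [DecidableEq V] (X Y : Ω → V) : Prop :=
  ∀ v, prob p X v = prob p Y v

/-! By reliability and database privacy, a message that is not demanded is independent of the
transcript and the remaining messages taken together. User privacy carries this over to the query
and answer of any single database under every demand set, so these reveal nothing about the demanded
messages `W_R`. Since `F`, `Q_n`, `(A_n, W_R)` form a Markov chain, this yields
`H(W_R) + H(A_n | F) ≤ H(A_1, …, A_N | F)`. Summing over `n` and using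
`H(A_1, …, A_N | F) ≤ ∑ H(A_n | F)` bounds `(N - 1) H(A_1, …, A_N | F)` below by `N H(W_R)`. -/

section Entropy

variable {α β γ δ : Type} {q : ℕ} {p : Ω → ℝ}

theorem prob_nonneg [DecidableEq α] (hp : ∀ ω, 0 ≤ p ω) (X : Ω → α) (a : α) : 0 ≤ prob p X a :=
  sum_nonneg fun ω _ => hp ω

theorem prob_mono [DecidableEq α] [DecidableEq β] (hp : ∀ ω, 0 ≤ p ω) {X : Ω → α} {Y : Ω → β}
    (h : X.FactorsThrough Y) (ω : Ω) : prob p Y (Y ω) ≤ prob p X (X ω) :=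
  sum_le_sum_of_subset_of_nonneg (monotone_filter_right _ fun _ _ hω => h hω) fun ω _ _ => hp ω

theorem prob_apply_pos [DecidableEq α] (hp : ∀ ω, 0 ≤ p ω) (X : Ω → α) {ω : Ω} (hω : 0 < p ω) :
    0 < prob p X (X ω) :=
  hω.trans_le (single_le_sum (f := p) (fun ω _ => hp ω) (by simp))

theorem sum_prob_mul [Fintype α] [DecidableEq α] (p : Ω → ℝ) (X : Ω → α) (f : α → ℝ) :
    ∑ a, prob p X a * f a = ∑ ω, p ω * f (X ω) := by
  rw [← sum_fiberwise univ X]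
  refine sum_congr rfl fun a _ => ?_
  rw [prob, sum_mul]
  exact sum_congr rfl fun ω hω => by rw [(mem_filter.1 hω).2]

theorem sum_prob [Fintype α] [DecidableEq α] (p : Ω → ℝ) (X : Ω → α) :
    ∑ a, prob p X a = ∑ ω, p ω := by
  simpa using sum_prob_mul p X 1

theorem prob_comp [Fintype α] [DecidableEq α] [DecidableEq β] (p : Ω → ℝ) (X : Ω → α)
    (f : α → β) (b : β) : prob p (fun ω => f (X ω)) b = ∑ a with f a = b, prob p X a := by
  simpa [prob, sum_filter] using (sum_prob_mul p X fun a => if f a = b then 1 else 0).symm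

theorem sum_prob_prodMk [Fintype α] [DecidableEq α] [DecidableEq β] (p : Ω → ℝ) (X : Ω → α)
    (Y : Ω → β) (b : β) : ∑ a, prob p (fun ω => (X ω, Y ω)) (a, b) = prob p Y b := by
  simp only [prob, Prod.mk.injEq, sum_filter, ite_and]
  rw [sum_comm]
  simp

theorem ent_eq_neg_sum_apply [Fintype α] [DecidableEq α] (q : ℕ) (p : Ω → ℝ) (X : Ω → α) :
    ent q p X = -∑ ω, p ω * Real.logb q (prob p X (X ω)) := by
  rw [ent, sum_prob_mul p X fun a => Real.logb q (prob p X a)]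

theorem IdentDist.ent_comp_eq [Finite α] [DecidableEq α] [Fintype β] [DecidableEq β]
    {X Y : Ω → α} (h : IdentDist p X Y) (q : ℕ) (f : α → β) :
    ent q p (fun ω => f (X ω)) = ent q p fun ω => f (Y ω) := by
  have := Fintype.ofFinite α
  simp only [ent, prob_comp, h _]

theorem ent_le_of_factorsThrough [Fintype α] [DecidableEq α] [Fintype β] [DecidableEq β]
    (hq : 1 < q) (hp : ∀ ω, 0 ≤ p ω) {X : Ω → α} {Y : Ω → β} (h : X.FactorsThrough Y) :
    ent q p X ≤ ent q p Y := by
  rw [ent_eq_neg_sum_apply, ent_eq_neg_sum_apply, neg_le_neg_iff]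
  refine sum_le_sum fun ω _ => ?_
  rcases (hp ω).eq_or_lt with hω | hω
  · simp [← hω]
  · exact mul_le_mul_of_nonneg_left (Real.logb_le_logb_of_le (mod_cast hq)
      (prob_apply_pos hp Y hω) (prob_mono hp h ω)) hω.le

theorem ent_congr_of_factorsThrough [Fintype α] [DecidableEq α] [Fintype β] [DecidableEq β]
    (hq : 1 < q) (hp : ∀ ω, 0 ≤ p ω) {X : Ω → α} {Y : Ω → β} (hXY : X.FactorsThrough Y)
    (hYX : Y.FactorsThrough X) : ent q p X = ent q p Y :=
  (ent_le_of_factorsThrough hq hp hXY).antisymm (ent_le_of_factorsThrough hq hp hYX)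

theorem ent_le_neg_sum_mul_logb [Fintype α] [DecidableEq α] (hq : 1 < q)
    (hp : p ∈ stdSimplex ℝ Ω) (X : Ω → α) {f : α → ℝ} (hf : ∀ a, 0 ≤ f a) (hsum : ∑ a, f a ≤ 1)
    (hac : ∀ a, f a = 0 → prob p X a = 0) :
    ent q p X ≤ -∑ a, prob p X a * Real.logb q (f a) := by
  have hlog : 0 < Real.log q := Real.log_pos (mod_cast hq)
  have hterm (a : α) : prob p X a * Real.logb q (f a) - prob p X a * Real.logb q (prob p X a) ≤
      (f a - prob p X a) / Real.log q := by
    rcases (prob_nonneg hp.1 X a).eq_or_lt with ha | ha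
    · simpa [← ha] using div_nonneg (hf a) hlog.le
    · have hfa : 0 < f a := (hf a).lt_of_ne fun h => ha.ne' (hac a h.symm)
      have hle := Real.log_le_sub_one_of_pos (div_pos hfa ha)
      rw [Real.log_div hfa.ne' ha.ne'] at hle
      rw [Real.logb, Real.logb, ← mul_sub, ← sub_div, ← mul_div_assoc]
      gcongr
      calc prob p X a * (Real.log (f a) - Real.log (prob p X a))
          ≤ prob p X a * (f a / prob p X a - 1) := by gcongr
        _ = f a - prob p X a := by field_simp
  have htotal : ∑ a, (f a - prob p X a) / Real.log q ≤ 0 := by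
    rw [← sum_div, sum_sub_distrib, sum_prob, hp.2]
    exact div_nonpos_of_nonpos_of_nonneg (by linarith) hlog.le
  have hdiff := (sum_le_sum fun a _ => hterm a).trans htotal
  rw [sum_sub_distrib] at hdiff
  rw [ent]
  linarith

theorem ent_le_logb_card [Fintype α] [DecidableEq α] (hq : 1 < q) (hp : p ∈ stdSimplex ℝ Ω)
    (X : Ω → α) : ent q p X ≤ Real.logb q (Fintype.card α) := by
  rcases isEmpty_or_nonempty α with _ | _
  · simp [ent]
  have hcard : (Fintype.card α : ℝ) ≠ 0 := by simp
  calc ent q p X ≤ -∑ a, prob p X a * Real.logb q (Fintype.card α : ℝ)⁻¹ :=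
        ent_le_neg_sum_mul_logb hq hp X (fun _ => by positivity) (by simp [hcard])
          fun _ h => absurd h (inv_ne_zero hcard)
    _ = Real.logb q (Fintype.card α) := by
        rw [← sum_mul, sum_prob, hp.2, Real.logb_inv, one_mul, neg_neg]

/-- The distribution of `(X, Y, Z)` with `X` and `Y` made independent given `Z`: the reference
distribution against which Gibbs' inequality yields submodularity. Values `z` of probability zero
get weight zero through `x / 0 = 0`. -/
noncomputable def condIndepProb [DecidableEq α] [DecidableEq β] [DecidableEq γ] (p : Ω → ℝ)
    (X : Ω → α) (Y : Ω → β) (Z : Ω → γ) (v : α × β × γ) : ℝ :=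
  prob p (fun ω => (X ω, Z ω)) (v.1, v.2.2) * prob p (fun ω => (Y ω, Z ω)) v.2 / prob p Z v.2.2

section Submodularity

variable [DecidableEq α] [DecidableEq β] [DecidableEq γ]

theorem condIndepProb_nonneg (hp : ∀ ω, 0 ≤ p ω) (X : Ω → α) (Y : Ω → β) (Z : Ω → γ)
    (v : α × β × γ) : 0 ≤ condIndepProb p X Y Z v :=
  div_nonneg (mul_nonneg (prob_nonneg hp _ _) (prob_nonneg hp _ _)) (prob_nonneg hp _ _)

theorem condIndepProb_apply_pos (hp : ∀ ω, 0 ≤ p ω) (X : Ω → α) (Y : Ω → β) (Z : Ω → γ) {ω : Ω}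
    (hω : 0 < p ω) : 0 < condIndepProb p X Y Z (X ω, Y ω, Z ω) :=
  div_pos (mul_pos (prob_apply_pos hp (fun ω => (X ω, Z ω)) hω)
    (prob_apply_pos hp (fun ω => (Y ω, Z ω)) hω)) (prob_apply_pos hp Z hω)

theorem prob_eq_zero_of_condIndepProb_eq_zero (hp : ∀ ω, 0 ≤ p ω) {X : Ω → α} {Y : Ω → β}
    {Z : Ω → γ} {v : α × β × γ} (hv : condIndepProb p X Y Z v = 0) :
    prob p (fun ω => (X ω, Y ω, Z ω)) v = 0 := by
  refine sum_eq_zero fun ω hω => (hp ω).eq_or_lt.elim Eq.symm fun hpω => ?_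
  exact absurd hv ((mem_filter.1 hω).2 ▸ (condIndepProb_apply_pos hp X Y Z hpω).ne')

theorem logb_condIndepProb (hp : ∀ ω, 0 ≤ p ω) (b : ℝ) (X : Ω → α) (Y : Ω → β) (Z : Ω → γ) {ω : Ω}
    (hω : 0 < p ω) : Real.logb b (condIndepProb p X Y Z (X ω, Y ω, Z ω)) =
      Real.logb b (prob p (fun ω => (X ω, Z ω)) (X ω, Z ω)) +
        Real.logb b (prob p (fun ω => (Y ω, Z ω)) (Y ω, Z ω)) - Real.logb b (prob p Z (Z ω)) := by
  have hXZ := (prob_apply_pos hp (fun ω => (X ω, Z ω)) hω).ne'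
  have hYZ := (prob_apply_pos hp (fun ω => (Y ω, Z ω)) hω).ne'
  rw [condIndepProb, Real.logb_div (mul_ne_zero hXZ hYZ) (prob_apply_pos hp Z hω).ne',
    Real.logb_mul hXZ hYZ]

variable [Fintype α] [Fintype β] [Fintype γ]

theorem sum_condIndepProb (p : Ω → ℝ) (X : Ω → α) (Y : Ω → β) (Z : Ω → γ) :
    ∑ v, condIndepProb p X Y Z v = ∑ ω, p ω := by
  calc ∑ v, condIndepProb p X Y Z v
      = ∑ c, (∑ a, prob p (fun ω => (X ω, Z ω)) (a, c)) *
          (∑ b, prob p (fun ω => (Y ω, Z ω)) (b, c)) / prob p Z c := by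
        simp only [condIndepProb, Fintype.sum_prod_type, sum_mul_sum, sum_div]
        rw [sum_comm_cycle]
    _ = ∑ ω, p ω := by simp only [sum_prob_prodMk, mul_self_div_self, sum_prob]

theorem sum_prob_mul_logb_condIndepProb (hp : ∀ ω, 0 ≤ p ω) (q : ℕ) (X : Ω → α) (Y : Ω → β)
    (Z : Ω → γ) : ∑ v, prob p (fun ω => (X ω, Y ω, Z ω)) v * Real.logb q (condIndepProb p X Y Z v) =
      ent q p Z - ent q p (fun ω => (X ω, Z ω)) - ent q p fun ω => (Y ω, Z ω) := by
  simp only [sum_prob_mul _ _ fun v => Real.logb q (condIndepProb p X Y Z v),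
    ent_eq_neg_sum_apply, ← sum_neg_distrib, ← sum_sub_distrib]
  refine sum_congr rfl fun ω _ => ?_
  rcases (hp ω).eq_or_lt with hω | hω
  · simp [← hω]
  · rw [logb_condIndepProb hp q X Y Z hω]
    ring

theorem ent_prodMk_add_ent_le (hq : 1 < q) (hp : p ∈ stdSimplex ℝ Ω) (X : Ω → α) (Y : Ω → β)
    (Z : Ω → γ) : ent q p (fun ω => (X ω, Y ω, Z ω)) + ent q p Z ≤
      ent q p (fun ω => (X ω, Z ω)) + ent q p fun ω => (Y ω, Z ω) := by
  have hgibbs := ent_le_neg_sum_mul_logb hq hp (fun ω => (X ω, Y ω, Z ω))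
    (condIndepProb_nonneg hp.1 X Y Z) (by rw [sum_condIndepProb, hp.2])
    fun _ => prob_eq_zero_of_condIndepProb_eq_zero hp.1
  rw [sum_prob_mul_logb_condIndepProb hp.1] at hgibbs
  linarith

theorem ent_add_ent_le_of_factorsThrough [Fintype δ] [DecidableEq δ] (hq : 1 < q)
    (hp : p ∈ stdSimplex ℝ Ω) {X : Ω → α} {Y : Ω → β} {Z : Ω → γ} {U : Ω → δ}
    (hU : U.FactorsThrough fun ω => (X ω, Y ω)) (hZX : Z.FactorsThrough X)
    (hZY : Z.FactorsThrough Y) : ent q p U + ent q p Z ≤ ent q p X + ent q p Y := by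
  have hle := ent_prodMk_add_ent_le hq hp X Y Z
  have hUXYZ : ent q p U ≤ ent q p fun ω => (X ω, Y ω, Z ω) :=
    ent_le_of_factorsThrough hq hp.1 fun _ _ h => hU (by simp_all)
  have hXZ : ent q p (fun ω => (X ω, Z ω)) ≤ ent q p X :=
    ent_le_of_factorsThrough hq hp.1 fun _ _ h => by simp [h, hZX h]
  have hYZ : ent q p (fun ω => (Y ω, Z ω)) ≤ ent q p Y :=
    ent_le_of_factorsThrough hq hp.1 fun _ _ h => by simp [h, hZY h]
  linarith

theorem ent_prodMk_le (hq : 1 < q) (hp : p ∈ stdSimplex ℝ Ω) (X : Ω → α) (Y : Ω → β) :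
    ent q p (fun ω => (X ω, Y ω)) ≤ ent q p X + ent q p Y := by
  have hconst : ent q p (fun _ => ()) = 0 := by simp [ent_eq_neg_sum_apply, prob, hp.2]
  have hle := ent_add_ent_le_of_factorsThrough hq hp (X := X) (Y := Y) (Z := fun _ => ())
    Function.FactorsThrough.rfl (fun _ _ _ => rfl) fun _ _ _ => rfl
  linarith

end Submodularity

end Entropy

section ConditionalEntropy

variable {α β γ δ : Type} [Fintype α] [DecidableEq α] [Fintype β] [DecidableEq β] [Fintype γ]
  [DecidableEq γ] [Fintype δ] [DecidableEq δ] {q : ℕ} {p : Ω → ℝ}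

theorem cent_le_ent (hq : 1 < q) (hp : p ∈ stdSimplex ℝ Ω) (X : Ω → α) (Y : Ω → β) :
    cent q p X Y ≤ ent q p X :=
  sub_le_iff_le_add.2 (ent_prodMk_le hq hp X Y)

theorem cent_nonneg (hq : 1 < q) (hp : ∀ ω, 0 ≤ p ω) (X : Ω → α) (Y : Ω → β) :
    0 ≤ cent q p X Y :=
  sub_nonneg.2 (ent_le_of_factorsThrough hq hp fun _ _ h => congrArg Prod.snd h)

theorem cent_eq_zero_of_factorsThrough (hq : 1 < q) (hp : ∀ ω, 0 ≤ p ω) {X : Ω → α} {Y : Ω → β}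
    (h : X.FactorsThrough Y) : cent q p X Y = 0 :=
  sub_eq_zero.2 <| ent_congr_of_factorsThrough hq hp (fun _ _ hY => by simp [hY, h hY])
    fun _ _ hXY => congrArg Prod.snd hXY

theorem cent_le_cent_of_factorsThrough_left (hq : 1 < q) (hp : ∀ ω, 0 ≤ p ω) {X : Ω → α}
    {Y : Ω → β} {Z : Ω → γ} (h : X.FactorsThrough fun ω => (Y ω, Z ω)) :
    cent q p X Z ≤ cent q p Y Z :=
  sub_le_sub_right (ent_le_of_factorsThrough hq hp fun _ _ hYZ => by
    simpa [h hYZ] using congrArg Prod.snd hYZ) _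

theorem cent_le_cent_of_cent_eq_zero (hq : 1 < q) (hp : p ∈ stdSimplex ℝ Ω) (X : Ω → α)
    {Y : Ω → β} {Z : Ω → γ} (h : cent q p Z Y = 0) : cent q p X Y ≤ cent q p X Z := by
  have hle := ent_prodMk_add_ent_le hq hp X Y Z
  have hmono : ent q p (fun ω => (X ω, Y ω)) ≤ ent q p fun ω => (X ω, Y ω, Z ω) :=
    ent_le_of_factorsThrough hq hp.1 fun _ _ hω => by simp_all
  have hcomm : ent q p (fun ω => (Y ω, Z ω)) = ent q p fun ω => (Z ω, Y ω) :=
    ent_congr_of_factorsThrough hq hp.1 (fun _ _ hω => by simp_all) fun _ _ hω => by simp_all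
  simp only [cent] at h ⊢
  linarith

theorem cent_le_cent_of_factorsThrough_right (hq : 1 < q) (hp : p ∈ stdSimplex ℝ Ω) (X : Ω → α)
    {Y : Ω → β} {Z : Ω → γ} (h : Z.FactorsThrough Y) : cent q p X Y ≤ cent q p X Z :=
  cent_le_cent_of_cent_eq_zero hq hp X (cent_eq_zero_of_factorsThrough hq hp.1 h)

theorem cent_prodMk (hq : 1 < q) (hp : ∀ ω, 0 ≤ p ω) (X : Ω → α) (Y : Ω → β) (Z : Ω → γ) :
    cent q p (fun ω => (X ω, Y ω)) Z = cent q p X Z + cent q p Y fun ω => (X ω, Z ω) := by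
  have hassoc : ent q p (fun ω => ((X ω, Y ω), Z ω)) = ent q p fun ω => (Y ω, X ω, Z ω) :=
    ent_congr_of_factorsThrough hq hp (fun _ _ hω => by simp_all) fun _ _ hω => by simp_all
  simp only [cent, hassoc]
  ring

theorem cent_eq_zero_mono (hq : 1 < q) (hp : p ∈ stdSimplex ℝ Ω) {X : Ω → α} {Y : Ω → β}
    {Z : Ω → γ} {Z' : Ω → δ} (hX : X.FactorsThrough fun ω => (Y ω, Z' ω))
    (hZ : Z.FactorsThrough Z') (h : cent q p Y Z = 0) : cent q p X Z' = 0 := by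
  refine le_antisymm ?_ (cent_nonneg hq hp.1 X Z')
  calc cent q p X Z' ≤ cent q p Y Z' := cent_le_cent_of_factorsThrough_left hq hp.1 hX
    _ ≤ cent q p Y Z := cent_le_cent_of_factorsThrough_right hq hp Y hZ
    _ = 0 := h

theorem IdentDist.cent_comp_eq {κ : Type} [Finite κ] [DecidableEq κ] {X Y : Ω → κ}
    (h : IdentDist p X Y) (q : ℕ) (f : κ → α) (g : κ → β) :
    cent q p (fun ω => f (X ω)) (fun ω => g (X ω)) =
      cent q p (fun ω => f (Y ω)) fun ω => g (Y ω) := by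
  rw [cent, cent, h.ent_comp_eq q g, h.ent_comp_eq q fun a => (f a, g a)]

theorem mi_prodMk_eq_zero (hq : 1 < q) (hp : p ∈ stdSimplex ℝ Ω) {X : Ω → α} {Y : Ω → β}
    {Z : Ω → γ} (h : ent q p (fun ω => (X ω, Y ω, Z ω)) = ent q p X + ent q p Y + ent q p Z) :
    mi q p X (fun ω => (Y ω, Z ω)) = 0 := by
  have hX := ent_prodMk_le hq hp X fun ω => (Y ω, Z ω)
  have hYZ := ent_prodMk_le hq hp Y Z
  rw [mi]
  linarith

-- `F`, `Q`, `X` form a Markov chain: `X` depends on `F` through `Q` only.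
theorem cent_le_cent_of_indep (hq : 1 < q) (hp : p ∈ stdSimplex ℝ Ω) {F : Ω → α} {C : Ω → β}
    {Q : Ω → γ} {X : Ω → δ} (hFC : mi q p F C = 0) (hQ : cent q p Q F = 0)
    (hX : cent q p X (fun ω => (Q ω, C ω)) = 0) : cent q p X Q ≤ cent q p X F := by
  have hmarkov := ent_add_ent_le_of_factorsThrough hq hp (U := fun ω => (F ω, C ω))
    (Z := fun ω => (X ω, Q ω)) (X := fun ω => (Q ω, X ω, F ω)) (Y := fun ω => (X ω, Q ω, C ω))
    (fun _ _ h => by simp_all) (fun _ _ h => by simp_all) fun _ _ h => by simp_all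
  have hQXF : cent q p Q (fun ω => (X ω, F ω)) ≤ cent q p Q F :=
    cent_le_cent_of_factorsThrough_right hq hp Q fun _ _ h => congrArg Prod.snd h
  have hQC := ent_prodMk_le hq hp Q C
  simp only [cent, mi] at *
  linarith

end ConditionalEntropy

section Tuple

variable {ι β : Type} {M : ι → Type} {q : ℕ} {p : Ω → ℝ}

/-- The subfamily `W_T = (W_k)_{k ∈ T}` as a single random variable. -/
def tuple (W : (k : ι) → Ω → M k) (T : Finset ι) (ω : Ω) (k : T) : M k :=
  W k ω

theorem tuple_eq_iff {Ω : Type} {W : (k : ι) → Ω → M k} {T : Finset ι} {ω ω' : Ω} :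
    tuple W T ω = tuple W T ω' ↔ ∀ k ∈ T, W k ω = W k ω' := by
  simp [funext_iff, tuple]

variable [DecidableEq ι] [∀ k, Fintype (M k)] [∀ k, DecidableEq (M k)] [Fintype β] [DecidableEq β]

theorem cent_tuple_insert (hq : 1 < q) (hp : ∀ ω, 0 ≤ p ω) (W : (k : ι) → Ω → M k) (T : Finset ι)
    (i : ι) (Y : Ω → β) : cent q p (tuple W (insert i T)) Y =
      cent q p (tuple W T) Y + cent q p (W i) fun ω => (tuple W T ω, Y ω) := by
  rw [← cent_prodMk hq hp]
  refine (cent_le_cent_of_factorsThrough_left hq hp fun _ _ h => ?_).antisymm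
    (cent_le_cent_of_factorsThrough_left hq hp fun _ _ h => ?_)
  all_goals simp_all [tuple_eq_iff]

theorem cent_tuple_le_sum (hq : 1 < q) (hp : p ∈ stdSimplex ℝ Ω) (W : (k : ι) → Ω → M k)
    (T : Finset ι) (Y : Ω → β) : cent q p (tuple W T) Y ≤ ∑ k ∈ T, cent q p (W k) Y := by
  induction T using Finset.induction_on with
  | empty =>
    exact (cent_eq_zero_of_factorsThrough hq hp.1 fun _ _ _ => by simp [tuple_eq_iff]).le
  | insert i T hi ih =>
    have hcond : cent q p (W i) (fun ω => (tuple W T ω, Y ω)) ≤ cent q p (W i) Y :=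
      cent_le_cent_of_factorsThrough_right hq hp _ fun _ _ h => congrArg Prod.snd h
    rw [cent_tuple_insert hq hp.1, sum_insert hi]
    linarith

theorem cent_pi_le_sum [Fintype ι] (hq : 1 < q) (hp : p ∈ stdSimplex ℝ Ω) (W : (k : ι) → Ω → M k)
    (Y : Ω → β) : cent q p (fun ω k => W k ω) Y ≤ ∑ k, cent q p (W k) Y := by
  refine le_trans (cent_le_cent_of_factorsThrough_left hq hp.1 fun _ _ h => ?_)
    (cent_tuple_le_sum hq hp W univ Y)
  simp only [Prod.mk.injEq, tuple_eq_iff] at h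
  exact funext fun k => h.1 k (mem_univ k)

theorem sum_cent_compl_le_cent_tuple [Fintype ι] (hq : 1 < q) (hp : p ∈ stdSimplex ℝ Ω)
    (W : (k : ι) → Ω → M k) (T : Finset ι) (Y : Ω → β) :
    ∑ k ∈ T, cent q p (W k) (fun ω => (tuple W {k}ᶜ ω, Y ω)) ≤ cent q p (tuple W T) Y := by
  induction T using Finset.induction_on with
  | empty =>
    exact (cent_eq_zero_of_factorsThrough hq hp.1 fun _ _ _ => by simp [tuple_eq_iff]).ge
  | insert i T hi ih =>
    have hcond : cent q p (W i) (fun ω => (tuple W {i}ᶜ ω, Y ω)) ≤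
        cent q p (W i) fun ω => (tuple W T ω, Y ω) :=
      cent_le_cent_of_factorsThrough_right hq hp _ fun _ _ h => by
        simp_all only [Prod.mk.injEq, tuple_eq_iff, mem_compl, mem_singleton, and_true]
        exact fun k hk => h.1 k (ne_of_mem_of_not_mem hk hi)
    rw [cent_tuple_insert hq hp.1, sum_insert hi]
    linarith

theorem sum_ent_le_ent_tuple [Fintype ι] (hq : 1 < q) (hp : p ∈ stdSimplex ℝ Ω)
    {W : (k : ι) → Ω → M k} (hW : ent q p (fun ω k => W k ω) = ∑ k, ent q p (W k))
    (T : Finset ι) : ∑ k ∈ T, ent q p (W k) ≤ ent q p (tuple W T) := by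
  have hsplit : ent q p (fun ω k => W k ω) ≤
      ent q p (tuple W T) + cent q p (tuple W Tᶜ) (tuple W T) := by
    rw [cent, add_sub_cancel]
    refine ent_le_of_factorsThrough hq hp.1 fun _ _ h => funext fun k => ?_
    simp only [Prod.mk.injEq, tuple_eq_iff, mem_compl] at h
    exact (em (k ∈ T)).elim (h.2 k) (h.1 k)
  have hrest : cent q p (tuple W Tᶜ) (tuple W T) ≤ ∑ k ∈ Tᶜ, ent q p (W k) :=
    (cent_tuple_le_sum hq hp W Tᶜ _).trans (sum_le_sum fun k _ => cent_le_ent hq hp _ _)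
  rw [← sum_add_sum_compl T] at hW
  linarith

theorem ent_le_cent_of_sum_ent_le (hq : 1 < q) (hp : p ∈ stdSimplex ℝ Ω)
    {W : (k : ι) → Ω → M k} {T : Finset ι} {Y : Ω → β}
    (h : ∑ k ∈ T, ent q p (W k) ≤ cent q p (tuple W T) Y) {i : ι} (hi : i ∈ T) :
    ent q p (W i) ≤ cent q p (W i) fun ω => (tuple W (T.erase i) ω, Y ω) := by
  have hrest : cent q p (tuple W (T.erase i)) Y ≤ ∑ k ∈ T.erase i, ent q p (W k) :=
    (cent_tuple_le_sum hq hp W _ Y).trans (sum_le_sum fun k _ => cent_le_ent hq hp _ _)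
  rw [← insert_erase hi, cent_tuple_insert hq hp.1, sum_insert (notMem_erase i T)] at h
  linarith

theorem ent_le_sum_length {ν : Type} [Fintype ν] [DecidableEq ν] (hq : 1 < q)
    (hp : p ∈ stdSimplex ℝ Ω) {d : ν → ℕ} (X : Ω → (n : ν) → Fin (d n) → Fin q) :
    ent q p X ≤ (∑ n, d n : ℕ) := by
  have hcard : Fintype.card ((n : ν) → Fin (d n) → Fin q) = q ^ ∑ n, d n := by
    simp [prod_pow_eq_pow_sum]
  simpa [hcard, Real.logb_pow, Real.logb_self_eq_one (Nat.one_lt_cast.2 hq)] using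
    ent_le_logb_card hq hp X

end Tuple

section Converse

variable {ι : Type} [Fintype ι] [DecidableEq ι] {M : ι → Type} [∀ k, Fintype (M k)]
  [∀ k, DecidableEq (M k)] {W : (k : ι) → Ω → M k} {q : ℕ} {p : Ω → ℝ}

theorem ent_le_cent_of_decodable {α : Type} [Fintype α] [DecidableEq α] (hq : 1 < q)
    (hp : p ∈ stdSimplex ℝ Ω) (hW : ent q p (fun ω k => W k ω) = ∑ k, ent q p (W k))
    {T : Finset ι} {D : Ω → α} (hdec : cent q p (tuple W T) D = 0)
    (hpriv : mi q p (tuple W Tᶜ) D = 0) {i : ι} (hi : i ∉ T) :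
    ent q p (W i) ≤ cent q p (W i) fun ω => (tuple W {i}ᶜ ω, D ω) := by
  have hD : ∑ k ∈ Tᶜ, ent q p (W k) ≤ cent q p (tuple W Tᶜ) D := by
    refine (sum_ent_le_ent_tuple hq hp hW Tᶜ).trans_eq ?_
    rw [mi] at hpriv
    rw [cent]
    linarith
  have hothers : cent q p (fun ω => (tuple W {i}ᶜ ω, D ω))
      (fun ω => (tuple W (Tᶜ.erase i) ω, D ω)) = 0 := by
    refine cent_eq_zero_mono hq hp (fun ω ω' h => ?_) (fun _ _ h => congrArg Prod.snd h) hdec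
    simp only [Prod.mk.injEq, tuple_eq_iff, mem_erase, mem_compl, mem_singleton] at h ⊢
    exact ⟨fun k hk => (em (k ∈ T)).elim (h.1 k) fun hkT => h.2.1 k ⟨hk, hkT⟩, h.2.2⟩
  calc ent q p (W i) ≤ cent q p (W i) fun ω => (tuple W (Tᶜ.erase i) ω, D ω) :=
        ent_le_cent_of_sum_ent_le hq hp hD (mem_compl.2 hi)
    _ ≤ cent q p (W i) fun ω => (tuple W {i}ᶜ ω, D ω) :=
        cent_le_cent_of_cent_eq_zero hq hp _ hothers

theorem cent_add_cent_le_cent_of_decodable {α β γ δ φ σ : Type} [Fintype α] [DecidableEq α]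
    [Fintype β] [DecidableEq β] [Fintype γ] [DecidableEq γ] [Fintype δ] [DecidableEq δ]
    [Fintype φ] [DecidableEq φ] [Fintype σ] [DecidableEq σ] (hq : 1 < q) (hp : p ∈ stdSimplex ℝ Ω)
    {A : Ω → α} {B : Ω → β} {Q : Ω → γ} {F : Ω → φ} {C : Ω → σ} {V : Ω → δ}
    (hFC : mi q p F C = 0) (hQ : cent q p Q F = 0) (hA : cent q p A (fun ω => (Q ω, C ω)) = 0)
    (hAB : A.FactorsThrough B) (hVC : V.FactorsThrough C)
    (hV : cent q p V (fun ω => (B ω, F ω)) = 0) :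
    cent q p V (fun ω => (A ω, Q ω)) + cent q p A F ≤ cent q p B F := by
  have hAV : cent q p (fun ω => (A ω, V ω)) (fun ω => (Q ω, C ω)) = 0 :=
    cent_eq_zero_mono hq hp (fun _ _ h => by simp_all [hVC (congrArg (fun v => v.2.2) h)])
      Function.FactorsThrough.rfl hA
  calc cent q p V (fun ω => (A ω, Q ω)) + cent q p A F
      ≤ cent q p V (fun ω => (A ω, Q ω)) + cent q p A Q := by
        gcongr
        exact cent_le_cent_of_cent_eq_zero hq hp A hQ
    _ = cent q p (fun ω => (A ω, V ω)) Q := by rw [cent_prodMk hq hp.1, add_comm]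
    _ ≤ cent q p (fun ω => (A ω, V ω)) F := cent_le_cent_of_indep hq hp hFC hQ hAV
    _ ≤ cent q p (fun ω => (B ω, V ω)) F :=
        cent_le_cent_of_factorsThrough_left hq hp.1 fun _ _ h => by
          simp_all [hAB (congrArg (fun v => v.1.1) h)]
    _ = cent q p B F := by rw [cent_prodMk hq hp.1, hV, add_zero]

theorem card_mul_le_of_forall_add_cent_le {ν φ : Type} {AT : ν → Type} [Fintype ν] [DecidableEq ν]
    [∀ n, Fintype (AT n)] [∀ n, DecidableEq (AT n)] [Fintype φ] [DecidableEq φ] (hq : 1 < q)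
    (hp : p ∈ stdSimplex ℝ Ω) {A : (n : ν) → Ω → AT n} {F : Ω → φ} {v : ℝ}
    (h : ∀ n, v + cent q p (A n) F ≤ cent q p (fun ω n => A n ω) F) :
    Fintype.card ν * v ≤ (Fintype.card ν - 1) * cent q p (fun ω n => A n ω) F := by
  have hsum : Fintype.card ν * v + ∑ n, cent q p (A n) F ≤
      Fintype.card ν * cent q p (fun ω n => A n ω) F := by
    simpa [sum_add_distrib] using sum_le_sum fun n (_ : n ∈ univ) => h n
  have hsubadd := cent_pi_le_sum hq hp A F
  linarith

theorem natCeil_div_le_sum_length {ν φ : Type} [Fintype ν] [DecidableEq ν] [Fintype φ]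
    [DecidableEq φ] (hq : 1 < q) (hp : p ∈ stdSimplex ℝ Ω) {d : ν → ℕ}
    {A : Ω → (n : ν) → Fin (d n) → Fin q} {F : Ω → φ} {b c : ℝ} (hc : 0 < c)
    (h : b ≤ c * cent q p A F) : ⌈b / c⌉₊ ≤ ∑ n, d n := by
  rw [Nat.ceil_le, div_le_iff₀' hc]
  exact h.trans <| mul_le_mul_of_nonneg_left
    ((cent_le_ent hq hp A F).trans (ent_le_sum_length hq hp A)) hc.le

end Converse

theorem exists_card_eq_notMem {ι : Type*} [Fintype ι] {P : ℕ} (hP : P < Fintype.card ι) (i : ι) :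
    ∃ T : Finset ι, T.card = P ∧ i ∉ T := by
  classical
  obtain ⟨T, hT, hcard⟩ := exists_subset_card_eq (s := ({i}ᶜ : Finset ι)) (n := P) (by
    rw [card_compl, card_singleton]
    lia)
  exact ⟨T, hcard, fun hi => by simpa using hT hi⟩

theorem download_cost_converse_general
    {Ω ι ν FT ST : Type} {MT : ι → Type} {QT AT : ν → Type}
    [Fintype Ω] [Fintype ι] [DecidableEq ι] [Fintype ν] [DecidableEq ν]
    [∀ k, Fintype (MT k)] [∀ k, DecidableEq (MT k)] [∀ n, Fintype (QT n)]
    [∀ n, DecidableEq (QT n)] [∀ n, Fintype (AT n)] [∀ n, DecidableEq (AT n)]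
    [Fintype FT] [DecidableEq FT] [Fintype ST] [DecidableEq ST]
    {q : ℕ} (hq : 1 < q) {p : Ω → ℝ} (hp : p ∈ stdSimplex ℝ Ω)
    (W : (k : ι) → Ω → MT k) (F : Ω → FT) (S : Ω → ST)
    (Q : Finset ι → (n : ν) → Ω → QT n) (A : Finset ι → (n : ν) → Ω → AT n)
    (𝓓 : Set (Finset ι))
    (hW : ent q p (fun ω k => W k ω) = ∑ k, ent q p (W k))
    (hind : ent q p (fun ω => (F ω, S ω, fun k => W k ω)) =
      ent q p F + ent q p S + ent q p fun ω k => W k ω)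
    (hQdet : ∀ T ∈ 𝓓, cent q p (fun ω n => Q T n ω) F = 0)
    (hAdet : ∀ T ∈ 𝓓, ∀ n,
      cent q p (A T n) (fun ω => (Q T n ω, (fun k => W k ω), S ω)) = 0)
    (hrel : ∀ T ∈ 𝓓, cent q p (tuple W T) (fun ω => ((fun n => A T n ω), F ω)) = 0)
    (hupriv : ∀ n, ∀ T₁ ∈ 𝓓, ∀ T₂ ∈ 𝓓, IdentDist p
      (fun ω => (Q T₁ n ω, A T₁ n ω, (fun k => W k ω), S ω))
      (fun ω => (Q T₂ n ω, A T₂ n ω, (fun k => W k ω), S ω)))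
    (hdpriv : ∀ T ∈ 𝓓, mi q p (tuple W Tᶜ)
      (fun ω => ((fun n => Q T n ω), (fun n => A T n ω), F ω)) = 0)
    {R : Finset ι} (hR : R ∈ 𝓓) (havoid : ∀ i ∈ R, ∃ T ∈ 𝓓, i ∉ T) :
    Fintype.card ν * ∑ k ∈ R, ent q p (W k) ≤
      (Fintype.card ν - 1) * cent q p (fun ω n => A R n ω) F := by
  have hmessage (n : ν) (i : ι) (hi : i ∈ R) :
      ent q p (W i) ≤ cent q p (W i) fun ω => (tuple W {i}ᶜ ω, A R n ω, Q R n ω) := by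
    obtain ⟨T, hT, hiT⟩ := havoid i hi
    have hdec : cent q p (tuple W T) (fun ω => ((fun n => Q T n ω), (fun n => A T n ω), F ω)) = 0 :=
      cent_eq_zero_mono hq hp (fun _ _ h => congrArg Prod.fst h)
        (fun _ _ h => congrArg Prod.snd h) (hrel T hT)
    calc ent q p (W i)
        ≤ cent q p (W i) fun ω =>
            (tuple W {i}ᶜ ω, (fun n => Q T n ω), (fun n => A T n ω), F ω) :=
          ent_le_cent_of_decodable hq hp hW hdec (hdpriv T hT) hiT
      _ ≤ cent q p (W i) fun ω => (tuple W {i}ᶜ ω, A T n ω, Q T n ω) :=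
          cent_le_cent_of_factorsThrough_right hq hp _ fun _ _ h => by
            simp_all [funext_iff]
      _ = cent q p (W i) fun ω => (tuple W {i}ᶜ ω, A R n ω, Q R n ω) :=
          (hupriv n T hT R hR).cent_comp_eq q (fun v => v.2.2.1 i)
            fun v => ((fun k : ({i}ᶜ : Finset ι) => v.2.2.1 k), v.2.1, v.1)
  refine card_mul_le_of_forall_add_cent_le hq hp fun n => ?_
  have hprivate : ∑ k ∈ R, ent q p (W k) ≤ cent q p (tuple W R) fun ω => (A R n ω, Q R n ω) :=
    (sum_le_sum (hmessage n)).trans (sum_cent_compl_le_cent_tuple hq hp W R _)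
  have hQ : cent q p (Q R n) F = 0 :=
    cent_eq_zero_mono hq hp (fun _ _ h => congrFun (congrArg Prod.fst h) n)
      Function.FactorsThrough.rfl (hQdet R hR)
  have hA : cent q p (A R n) (fun ω => (Q R n ω, S ω, fun k => W k ω)) = 0 :=
    cent_eq_zero_mono hq hp (fun _ _ h => congrArg Prod.fst h) (fun _ _ h => by simp_all)
      (hAdet R hR n)
  have hdatabase := cent_add_cent_le_cent_of_decodable hq hp (mi_prodMk_eq_zero hq hp hind) hQ hA
    (B := fun ω n => A R n ω) (V := tuple W R) (fun _ _ h => congrFun h n)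
    (fun _ _ h => tuple_eq_iff.2 fun k _ => congrFun (congrArg Prod.snd h) k) (hrel R hR)
  linarith

theorem download_cost_converse
    {Ω MT QT FT ST : Type}
    [Fintype Ω] [Fintype MT] [DecidableEq MT] [Fintype QT] [DecidableEq QT]
    [Fintype FT] [DecidableEq FT] [Fintype ST] [DecidableEq ST]
    (N K P L q : ℕ) (hN : 2 ≤ N) (hK : 2 ≤ K) (hP1 : 1 ≤ P) (hP2 : P ≤ K - 1)
    (hL : 1 ≤ L) (hq : IsPrimePow q)
    (p : Ω → ℝ) (hp0 : ∀ ω, 0 ≤ p ω) (hp1 : (∑ ω, p ω) = 1)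
    (W : Fin K → Ω → MT) (F : Ω → FT) (S : Ω → ST)
    (Q : Finset (Fin K) → Fin N → Ω → QT)
    (d : Fin N → ℕ)
    (A : Finset (Fin K) → (n : Fin N) → Ω → (Fin (d n) → Fin q))
    (hWk : ∀ k, ent q p (W k) = (L : ℝ))
    (hWall : ent q p (fun ω (k : Fin K) => W k ω) = (K : ℝ) * L)
    (hind : ent q p (fun ω => (F ω, S ω, fun k : Fin K => W k ω)) =
      ent q p F + ent q p S + ent q p (fun ω (k : Fin K) => W k ω))
    (hQdet : ∀ 𝒫₀ : Finset (Fin K), 𝒫₀.card = P →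
      cent q p (fun ω (n : Fin N) => Q 𝒫₀ n ω) F = 0)
    (hAdet : ∀ 𝒫₀ : Finset (Fin K), 𝒫₀.card = P → ∀ n : Fin N,
      cent q p (A 𝒫₀ n) (fun ω => (Q 𝒫₀ n ω, (fun k : Fin K => W k ω), S ω)) = 0)
    (hrel : ∀ 𝒫₀ : Finset (Fin K), 𝒫₀.card = P →
      cent q p (fun ω (k : {x : Fin K // x ∈ 𝒫₀}) => W k.1 ω)
        (fun ω => ((fun n : Fin N => A 𝒫₀ n ω), F ω)) = 0)
    (hupriv : ∀ (n : Fin N) (𝒫₁ 𝒫₂ : Finset (Fin K)), 𝒫₁.card = P → 𝒫₂.card = P →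
      IdentDist p
        (fun ω => (Q 𝒫₁ n ω, A 𝒫₁ n ω, (fun k : Fin K => W k ω), S ω))
        (fun ω => (Q 𝒫₂ n ω, A 𝒫₂ n ω, (fun k : Fin K => W k ω), S ω)))
    (hdpriv : ∀ 𝒫₀ : Finset (Fin K), 𝒫₀.card = P →
      mi q p (fun ω (k : {x : Fin K // x ∈ 𝒫₀ᶜ}) => W k.1 ω)
        (fun ω => ((fun n : Fin N => Q 𝒫₀ n ω), (fun n : Fin N => A 𝒫₀ n ω), F ω)) = 0)
    : Nat.ceil ((N : ℝ) * P * L / ((N : ℝ) - 1)) ≤ ∑ n : Fin N, d n := by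
  have hp : p ∈ stdSimplex ℝ Ω := ⟨hp0, hp1⟩
  have havoid := exists_card_eq_notMem (ι := Fin K) (P := P) (by simp; lia)
  obtain ⟨R, hR : R.card = P, -⟩ := havoid ⟨0, by lia⟩
  have hmessages : ent q p (fun ω k => W k ω) = ∑ k, ent q p (W k) := by simp [hWall, hWk]
  have hbound := download_cost_converse_general hq.one_lt hp W F S Q A {T | T.card = P} hmessages
    hind hQdet hAdet hrel (fun n T₁ hT₁ T₂ hT₂ => hupriv n T₁ T₂ hT₁ hT₂) hdpriv hR
    fun i _ => havoid i
  exact natCeil_div_le_sum_length hq.one_lt hp (sub_pos.2 (Nat.one_lt_cast.2 hN))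
    (A := fun ω n => A R n ω) (F := F) (by simpa [hWk, hR, mul_assoc] using hbound)

end MMSPIR
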